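/- Let a ≥ b ≥ 0 with a > 0 and define ω(x) = (1 + b x²)/(1 + a x²) for x > 0. Then the Laplace transform L(ω) is a generalized Stieltjes function of order 2 (hence logarithmically completely monotonic, and ω is infinitely divisible), and for x > 0: L(ω)(x) = (b/a)(1/x) + (1 - b/a)(1/√a)( ci(x/√a) sin(x/√a) - si(x/√a) cos(x/√a) ), where si(x) = -∫_x^∞ (sin t)/t dt and ci(x) = -∫_x^∞ (cos t)/t dt. -/

import Mathlib

open MeasureTheory Filter Set

/-- The Laplace transform of `g`. -/
noncomputable def LaplaceTransform (g : ℝ → ℝ) (x : ℝ) : ℝ :=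
  ∫ t in Set.Ioi (0:ℝ), Real.exp (-x * t) * g t

/-- `f` is completely monotonic on `(0,∞)`. -/
def CompletelyMonotonic (f : ℝ → ℝ) : Prop :=
  (∀ x : ℝ, 0 < x → ContDiffAt ℝ (⊤ : ℕ∞) f x) ∧
  ∀ (n : ℕ) (x : ℝ), 0 < x → 0 ≤ (-1 : ℝ) ^ n * iteratedDeriv n f x

/-- `f` is logarithmically completely monotonic on `(0,∞)`. -/
def LogCompletelyMonotonic (f : ℝ → ℝ) : Prop :=
  (∀ x : ℝ, 0 < x → 0 < f x) ∧ (∀ x : ℝ, 0 < x → ContDiffAt ℝ (⊤ : ℕ∞) f x) ∧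
  CompletelyMonotonic (fun x => -deriv f x / f x)

/-- `f` is a generalized Stieltjes function of order `lam` on `(0,∞)`. -/
def IsGenStieltjes (lam : ℝ) (f : ℝ → ℝ) : Prop :=
  ∃ (μ : Measure ℝ) (c : ℝ), 0 ≤ c ∧ μ (Set.Iio 0) = 0 ∧
    ∀ x : ℝ, 0 < x →
      Integrable (fun t => (x + t) ^ (-lam)) μ ∧
      f x = (∫ t, (x + t) ^ (-lam) ∂μ) + c

/-- Nielsen's beta function. -/
noncomputable def nielsenBeta (x : ℝ) : ℝ :=
  ∫ t in Set.Ioi (0:ℝ), Real.exp (-x * t) / (1 + Real.exp (-t))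

/-!
Writing `f * g` for convolution on the half-line, `-L(ω)' / L(ω) = L(k)` where `k` solves
`t ω(t) = (ω * k)(t)`, so `L(ω)` is logarithmically completely monotonic once `k ≥ 0`.
Differentiating gives a Volterra equation for `1 - k` whose Neumann series has nonnegative terms
when `ω` decreases; hence `k ≤ 1`. Nonnegativity is automatic when `ω` is log-convex. The rational
weight need not be log-convex near the origin, but as long as `0 ≤ k ≤ 1` the contribution of the
wrong sign, `∫₀ˢ (ω(s) ω'(v) - ω'(s) ω(v))⁺ dv`, stays below `ω(s)²`, so `k` has no first zero.

With `γ = 1 - b / a` and `c = 1 / √a` one has `ω(t) = t L(1 - γ cos (c ·))(t)`, and Fubini turns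
this into `L(ω)(x) = ∫₀^∞ (1 - γ cos (c s)) (x + s)⁻² ds`, the Stieltjes representation.
Integrating `∫ (1 - cos u) (y + u)⁻² du` by parts and expanding `sin (t - y)` gives the sine and
cosine integrals.
-/

section DensityMeasure

/-- The measure `g(t) dt` on `(0,∞)`. Negative values of `g` are truncated to `0`. -/
noncomputable def halfLineMeasure (g : ℝ → ℝ) : Measure ℝ :=
  (volume.restrict (Ioi 0)).withDensity fun t => ENNReal.ofReal (g t)

instance (g : ℝ → ℝ) : SFinite (halfLineMeasure g) := by
  unfold halfLineMeasure
  infer_instance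

lemma halfLineMeasure_Iio_zero (g : ℝ → ℝ) : halfLineMeasure g (Iio 0) = 0 := by
  apply withDensity_absolutelyContinuous
  rw [Measure.restrict_apply measurableSet_Iio, Iio_inter_Ioi, Ioo_self, measure_empty]

variable {g : ℝ → ℝ}

lemma toReal_ofReal_smul_ae_eq (hg_nonneg : ∀ t, 0 < t → 0 ≤ g t) (f : ℝ → ℝ) :
    (fun t => (ENNReal.ofReal (g t)).toReal • f t)
      =ᵐ[volume.restrict (Ioi 0)] fun t => f t * g t := by
  filter_upwards [ae_restrict_mem measurableSet_Ioi] with t ht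
  rw [ENNReal.toReal_ofReal (hg_nonneg t ht), smul_eq_mul, mul_comm]

lemma integrable_halfLineMeasure_iff (hg : Measurable g) (hg_nonneg : ∀ t, 0 < t → 0 ≤ g t)
    {f : ℝ → ℝ} :
    Integrable f (halfLineMeasure g) ↔ IntegrableOn (fun t => f t * g t) (Ioi 0) := by
  rw [halfLineMeasure, integrable_withDensity_iff_integrable_smul' hg.ennreal_ofReal (by simp)]
  exact integrable_congr (toReal_ofReal_smul_ae_eq hg_nonneg f)

lemma integral_halfLineMeasure (hg : Measurable g) (hg_nonneg : ∀ t, 0 < t → 0 ≤ g t)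
    (f : ℝ → ℝ) : ∫ t, f t ∂halfLineMeasure g = ∫ t in Ioi 0, f t * g t := by
  rw [halfLineMeasure, integral_withDensity_eq_integral_toReal_smul hg.ennreal_ofReal (by simp)]
  exact integral_congr_ae (toReal_ofReal_smul_ae_eq hg_nonneg f)

end DensityMeasure

section Laplace

/-- The Laplace integral of `g` converges absolutely at every `x > 0`. -/
def LaplaceIntegrable (g : ℝ → ℝ) : Prop :=
  ∀ x : ℝ, 0 < x → IntegrableOn (fun t => Real.exp (-x * t) * g t) (Ioi 0)

variable {g : ℝ → ℝ}

lemma laplaceIntegrable_of_abs_le (hg : Measurable g) {C : ℝ} (hC : ∀ t, 0 < t → |g t| ≤ C) :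
    LaplaceIntegrable g := by
  intro x hx
  refine Integrable.mul_bdd (c := C) (integrableOn_exp_mul_Ioi (neg_lt_zero.2 hx) 0)
    hg.aestronglyMeasurable ?_
  filter_upwards [ae_restrict_mem measurableSet_Ioi] with t ht using hC t ht

lemma laplaceTransform_pos (hg_pos : ∀ t, 0 < t → 0 < g t) (hint : LaplaceIntegrable g)
    {x : ℝ} (hx : 0 < x) : 0 < LaplaceTransform g x := by
  have integrand_pos (t : ℝ) (ht : t ∈ Ioi 0) : 0 < Real.exp (-x * t) * g t :=
    mul_pos (Real.exp_pos _) (hg_pos t ht)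
  rw [LaplaceTransform, setIntegral_pos_iff_support_of_nonneg_ae _ (hint x hx)]
  · have Ioi_subset : Ioi 0 ⊆ Function.support fun t => Real.exp (-x * t) * g t :=
      fun t ht => (integrand_pos t ht).ne'
    rw [inter_eq_right.2 Ioi_subset, Real.volume_Ioi]
    exact ENNReal.zero_lt_top
  · filter_upwards [ae_restrict_mem measurableSet_Ioi] with t ht using (integrand_pos t ht).le

lemma laplaceTransform_eq_mgf (hg : Measurable g) (hg_nonneg : ∀ t, 0 < t → 0 ≤ g t) :
    LaplaceTransform g = ProbabilityTheory.mgf Neg.neg (halfLineMeasure g) := by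
  ext x
  simp only [LaplaceTransform, ProbabilityTheory.mgf, integral_halfLineMeasure hg hg_nonneg,
    mul_neg, neg_mul]

lemma mem_interior_integrableExpSet_neg (hg : Measurable g) (hg_nonneg : ∀ t, 0 < t → 0 ≤ g t)
    (hint : LaplaceIntegrable g) {x : ℝ} (hx : 0 < x) :
    x ∈ interior (ProbabilityTheory.integrableExpSet Neg.neg (halfLineMeasure g)) := by
  refine interior_maximal (fun y hy => ?_) isOpen_Ioi hx
  rw [ProbabilityTheory.integrableExpSet, mem_ofPred_eq,
    integrable_halfLineMeasure_iff hg hg_nonneg]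
  simpa only [mul_neg, neg_mul] using hint y hy

lemma contDiffAt_laplaceTransform (hg : Measurable g) (hg_nonneg : ∀ t, 0 < t → 0 ≤ g t)
    (hint : LaplaceIntegrable g) {x : ℝ} (hx : 0 < x) :
    ContDiffAt ℝ (⊤ : ℕ∞) (LaplaceTransform g) x := by
  rw [laplaceTransform_eq_mgf hg hg_nonneg]
  exact (ProbabilityTheory.analyticAt_mgf
    (mem_interior_integrableExpSet_neg hg hg_nonneg hint hx)).contDiffAt

lemma iteratedDeriv_laplaceTransform (hg : Measurable g) (hg_nonneg : ∀ t, 0 < t → 0 ≤ g t)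
    (hint : LaplaceIntegrable g) (n : ℕ) {x : ℝ} (hx : 0 < x) :
    iteratedDeriv n (LaplaceTransform g) x
      = (-1) ^ n * LaplaceTransform (fun t => t ^ n * g t) x := by
  rw [laplaceTransform_eq_mgf hg hg_nonneg, ProbabilityTheory.iteratedDeriv_mgf
    (mem_interior_integrableExpSet_neg hg hg_nonneg hint hx),
    integral_halfLineMeasure hg hg_nonneg, LaplaceTransform, ← integral_const_mul]
  refine setIntegral_congr_fun measurableSet_Ioi fun t _ => ?_
  simp only [neg_pow t, mul_neg, neg_mul]
  ring

lemma completelyMonotonic_laplaceTransform (hg : Measurable g)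
    (hg_nonneg : ∀ t, 0 < t → 0 ≤ g t) (hint : LaplaceIntegrable g) :
    CompletelyMonotonic (LaplaceTransform g) := by
  refine ⟨fun x hx => contDiffAt_laplaceTransform hg hg_nonneg hint hx, fun n x hx => ?_⟩
  rw [iteratedDeriv_laplaceTransform hg hg_nonneg hint n hx, ← mul_assoc, ← mul_pow,
    neg_one_mul, neg_neg, one_pow, one_mul]
  exact setIntegral_nonneg measurableSet_Ioi fun t (ht : 0 < t) =>
    mul_nonneg (Real.exp_pos _).le (mul_nonneg (pow_pos ht n).le (hg_nonneg t ht))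

lemma CompletelyMonotonic.congr {F G : ℝ → ℝ} (hG : CompletelyMonotonic G)
    (hFG : ∀ x, 0 < x → F x = G x) : CompletelyMonotonic F := by
  have eventually_eq (x : ℝ) (hx : 0 < x) : F =ᶠ[nhds x] G := by
    filter_upwards [Ioi_mem_nhds hx] with y hy using hFG y hy
  refine ⟨fun x hx => (hG.1 x hx).congr_of_eventuallyEq (eventually_eq x hx), fun n x hx => ?_⟩
  rw [(eventually_eq x hx).iteratedDeriv_eq]
  exact hG.2 n x hx

end Laplace

section Convolution

/-- The convolution `(f * g)(s) = ∫₀ˢ f(v) g(s - v) dv` of functions on the half-line; only its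
values at `s ≥ 0` are meaningful. -/
noncomputable def halfLineConv (f g : ℝ → ℝ) (s : ℝ) : ℝ :=
  ∫ v in (0 : ℝ)..s, f v * g (s - v)

variable {f g : ℝ → ℝ}

lemma continuous_halfLineConv (hf : Continuous f) (hg : Continuous g) :
    Continuous (halfLineConv f g) := by
  refine intervalIntegral.continuous_parametric_intervalIntegral_of_continuous ?_ continuous_id
  simp only [Function.uncurry_def]
  fun_prop

lemma halfLineConv_comm (f g : ℝ → ℝ) : halfLineConv f g = halfLineConv g f := by
  ext s
  have := intervalIntegral.integral_comp_sub_left (a := 0) (b := s) (fun v => g v * f (s - v)) s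
  simpa [halfLineConv, mul_comm] using this

lemma halfLineConv_const_left (c : ℝ) (g : ℝ → ℝ) (s : ℝ) :
    halfLineConv (fun _ => c) g s = c * ∫ u in (0 : ℝ)..s, g u := by
  simp [halfLineConv]

lemma halfLineConv_add_left {f₁ f₂ : ℝ → ℝ} (hf₁ : Continuous f₁) (hf₂ : Continuous f₂)
    (hg : Continuous g) (s : ℝ) :
    halfLineConv (fun v => f₁ v + f₂ v) g s = halfLineConv f₁ g s + halfLineConv f₂ g s := by
  simp only [halfLineConv, add_mul]
  apply intervalIntegral.integral_add <;> exact Continuous.intervalIntegrable (by fun_prop) _ _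

lemma halfLineConv_smul_left (c : ℝ) (f g : ℝ → ℝ) (s : ℝ) :
    halfLineConv (fun v => c * f v) g s = c * halfLineConv f g s := by
  simp only [halfLineConv, mul_assoc, intervalIntegral.integral_const_mul]

lemma integral_integral_triangle_swap {G : ℝ → ℝ → ℝ} (hG : Continuous (Function.uncurry G))
    {a b : ℝ} (hab : a ≤ b) :
    ∫ u in a..b, ∫ w in a..u, G u w = ∫ w in a..b, ∫ u in w..b, G u w := by
  let H (u w : ℝ) : ℝ := {z : ℝ × ℝ | z.2 < z.1}.indicator (Function.uncurry G) (u, w)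
  have integrable_H : Integrable (Function.uncurry H)
      ((volume.restrict (Ioc a b)).prod (volume.restrict (Ioc a b))) := by
    refine Integrable.indicator ?_ (measurableSet_lt measurable_snd measurable_fst)
    rw [Measure.prod_restrict]
    exact (hG.continuousOn.integrableOn_compact (isCompact_Icc.prod isCompact_Icc)).mono_set
      (prod_mono Ioc_subset_Icc_self Ioc_subset_Icc_self)
  have inner_left (u : ℝ) (hu : u ∈ Ioc a b) :
      ∫ w in a..u, G u w = ∫ w in Ioc a b, H u w := by
    have : H u = (Iio u).indicator (G u) := by ext w; simp [H, indicator, Function.uncurry]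
    rw [this, setIntegral_indicator measurableSet_Iio, intervalIntegral.integral_of_le hu.1.le,
      integral_Ioc_eq_integral_Ioo]
    congr 2
    ext w
    simp only [mem_Ioo, mem_inter_iff, mem_Ioc, mem_Iio]
    exact ⟨fun h => ⟨⟨h.1, h.2.le.trans hu.2⟩, h.2⟩, fun h => ⟨h.1.1, h.2⟩⟩
  have inner_right (w : ℝ) (hw : w ∈ Ioc a b) :
      ∫ u in w..b, G u w = ∫ u in Ioc a b, H u w := by
    have : (fun u => H u w) = (Ioi w).indicator fun u => G u w := by
      ext u; simp [H, indicator, Function.uncurry]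
    rw [this, setIntegral_indicator measurableSet_Ioi, intervalIntegral.integral_of_le hw.2,
      Ioc_inter_Ioi, max_eq_right hw.1.le]
  rw [intervalIntegral.integral_of_le hab, intervalIntegral.integral_of_le hab,
    setIntegral_congr_fun measurableSet_Ioc inner_left,
    setIntegral_congr_fun measurableSet_Ioc inner_right, integral_integral_swap integrable_H]

lemma integral_halfLineConv (hf : Continuous f) (hg : Continuous g) {s : ℝ} (hs : 0 ≤ s) :
    ∫ u in (0 : ℝ)..s, halfLineConv f g u
      = halfLineConv (fun v => ∫ w in (0 : ℝ)..v, f w) g s := by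
  rw [halfLineConv_comm f g, halfLineConv_comm _ g]
  have swap := integral_integral_triangle_swap (G := fun u w => g w * f (u - w))
    (by simp only [Function.uncurry_def]; fun_prop) hs
  simpa only [halfLineConv, intervalIntegral.integral_const_mul,
    intervalIntegral.integral_comp_sub_right, sub_self] using swap

lemma laplaceTransform_halfLineConv (hf : LaplaceIntegrable f) (hg : LaplaceIntegrable g)
    {x : ℝ} (hx : 0 < x) :
    LaplaceTransform (halfLineConv f g) x = LaplaceTransform f x * LaplaceTransform g x := by
  have conv := integral_posConvolution (hf x hx) (hg x hx) (ContinuousLinearMap.mul ℝ ℝ)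
  simp only [ContinuousLinearMap.mul_apply'] at conv
  rw [LaplaceTransform, LaplaceTransform, LaplaceTransform, ← conv]
  refine setIntegral_congr_fun measurableSet_Ioi fun s _ => ?_
  simp only [halfLineConv, ← intervalIntegral.integral_const_mul]
  refine intervalIntegral.integral_congr fun v _ => ?_
  have exp_split : Real.exp (-x * s) = Real.exp (-x * v) * Real.exp (-x * (s - v)) := by
    rw [← Real.exp_add]; ring_nf
  simp only [exp_split]
  ring

end Convolution

section Volterra

/-- The solution of the Volterra equation `h = p + r * h`, where `*` is the convolution on the
half-line, given by its Neumann series. -/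
noncomputable def volterraSolution (r p : ℝ → ℝ) (s : ℝ) : ℝ :=
  ∑' n : ℕ, (halfLineConv r)^[n] p s

variable {r p : ℝ → ℝ}

lemma continuous_iterate_halfLineConv (hr : Continuous r) (hp : Continuous p) (n : ℕ) :
    Continuous ((halfLineConv r)^[n] p) := by
  induction n with
  | zero => exact hp
  | succ n ih =>
    rw [Function.iterate_succ_apply']
    exact continuous_halfLineConv hr ih

lemma iterate_halfLineConv_nonneg (hr_nonneg : ∀ t, 0 ≤ t → 0 ≤ r t)
    (hp_nonneg : ∀ t, 0 ≤ t → 0 ≤ p t) (n : ℕ) {s : ℝ} (hs : 0 ≤ s) :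
    0 ≤ (halfLineConv r)^[n] p s := by
  induction n generalizing s with
  | zero => exact hp_nonneg s hs
  | succ n ih =>
    rw [Function.iterate_succ_apply']
    exact intervalIntegral.integral_nonneg hs fun v hv =>
      mul_nonneg (hr_nonneg v hv.1) (ih (sub_nonneg.2 hv.2))

lemma abs_iterate_halfLineConv_le {C D S : ℝ} (hr : ∀ t, |t| ≤ S → |r t| ≤ C)
    (hp : ∀ t, |t| ≤ S → |p t| ≤ D) (n : ℕ) {s : ℝ} (hs : |s| ≤ S) :
    |(halfLineConv r)^[n] p s| ≤ D * (C ^ n * (|s| ^ n / n.factorial)) := by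
  induction n generalizing s with
  | zero => simpa using hp s hs
  | succ n ih =>
    have integrand_le (v : ℝ) (hv : v ∈ uIoc 0 s) :
        ‖(halfLineConv r)^[n] p v * r (s - v)‖
          ≤ D * C ^ (n + 1) / n.factorial * |v - 0| ^ n := by
      have abs_v_le : |v| ≤ |s| := by
        simpa using abs_sub_left_of_mem_uIcc (uIoc_subset_uIcc hv)
      have abs_sub_le : |s - v| ≤ |s| := by
        simpa using abs_sub_right_of_mem_uIcc (uIoc_subset_uIcc hv)
      rw [norm_mul, Real.norm_eq_abs, Real.norm_eq_abs]
      calc |(halfLineConv r)^[n] p v| * |r (s - v)|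
          ≤ D * (C ^ n * (|v| ^ n / n.factorial)) * C :=
            mul_le_mul (ih (abs_v_le.trans hs)) (hr _ (abs_sub_le.trans hs)) (abs_nonneg _)
              ((abs_nonneg _).trans (ih (abs_v_le.trans hs)))
        _ = D * C ^ (n + 1) / n.factorial * |v - 0| ^ n := by rw [sub_zero]; ring
    rw [Function.iterate_succ_apply', halfLineConv_comm, halfLineConv, ← Real.norm_eq_abs]
    calc ‖∫ v in (0 : ℝ)..s, (halfLineConv r)^[n] p v * r (s - v)‖
        ≤ ∫ v in uIoc 0 s, ‖(halfLineConv r)^[n] p v * r (s - v)‖ :=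
          intervalIntegral.norm_integral_le_integral_norm_uIoc
      _ ≤ ∫ v in uIoc 0 s, D * C ^ (n + 1) / n.factorial * |v - 0| ^ n := by
          refine integral_mono_of_nonneg (ae_of_all _ fun v => norm_nonneg _) ?_ ?_
          · exact Continuous.integrableOn_uIoc (by fun_prop)
          · filter_upwards [ae_restrict_mem measurableSet_uIoc] with v hv using integrand_le v hv
      _ = D * (C ^ (n + 1) * (|s| ^ (n + 1) / (n + 1).factorial)) := by
          rw [integral_const_mul, integral_pow_abs_sub_uIoc, sub_zero, Nat.factorial_succ]
          push_cast
          field_simp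

lemma exists_summable_abs_iterate_halfLineConv_le (hr : Continuous r) (hp : Continuous p)
    (S : ℝ) : ∃ u : ℕ → ℝ, Summable u ∧
      ∀ n s, s ∈ Icc (-S) S → |(halfLineConv r)^[n] p s| ≤ u n := by
  obtain ⟨C, hC⟩ := isCompact_Icc.exists_bound_of_continuousOn (hr.continuousOn (s := Icc (-S) S))
  obtain ⟨D, hD⟩ := isCompact_Icc.exists_bound_of_continuousOn (hp.continuousOn (s := Icc (-S) S))
  refine ⟨fun n => |D| * ((|C| * S) ^ n / n.factorial),
    (Real.summable_pow_div_factorial _).mul_left _, fun n s hs => ?_⟩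
  have hs' : |s| ≤ S := abs_le.2 hs
  calc |(halfLineConv r)^[n] p s| ≤ |D| * (|C| ^ n * (|s| ^ n / n.factorial)) :=
        abs_iterate_halfLineConv_le (fun t ht => (hC t (abs_le.1 ht)).trans (le_abs_self C))
          (fun t ht => (hD t (abs_le.1 ht)).trans (le_abs_self D)) n hs'
    _ ≤ |D| * ((|C| * S) ^ n / n.factorial) := by
        rw [mul_pow, mul_div_assoc]
        gcongr

lemma continuous_volterraSolution (hr : Continuous r) (hp : Continuous p) :
    Continuous (volterraSolution r p) := by
  refine continuous_iff_continuousAt.2 fun s => ?_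
  obtain ⟨u, hu, hle⟩ := exists_summable_abs_iterate_halfLineConv_le hr hp (|s| + 1)
  refine (continuousOn_tsum (fun n => (continuous_iterate_halfLineConv hr hp n).continuousOn)
    hu hle).continuousAt (Icc_mem_nhds ?_ ?_)
  · linarith [neg_abs_le s]
  · linarith [le_abs_self s]

lemma volterraSolution_nonneg (hr_nonneg : ∀ t, 0 ≤ t → 0 ≤ r t)
    (hp_nonneg : ∀ t, 0 ≤ t → 0 ≤ p t) {s : ℝ} (hs : 0 ≤ s) : 0 ≤ volterraSolution r p s :=
  tsum_nonneg fun n => iterate_halfLineConv_nonneg hr_nonneg hp_nonneg n hs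

lemma volterraSolution_eq_add_halfLineConv (hr : Continuous r) (hp : Continuous p) (s : ℝ) :
    volterraSolution r p s = p s + halfLineConv r (volterraSolution r p) s := by
  obtain ⟨u, hu, hle⟩ := exists_summable_abs_iterate_halfLineConv_le hr hp |s|
  have summable_iterate (v : ℝ) (hv : v ∈ Icc (-|s|) |s|) :
      Summable fun n => (halfLineConv r)^[n] p v := hu.of_norm_bounded fun n => hle n v hv
  have sub_mem_Icc (v : ℝ) (hv : v ∈ uIoc 0 s) : s - v ∈ Icc (-|s|) |s| :=
    abs_le.1 (by simpa using abs_sub_right_of_mem_uIcc (uIoc_subset_uIcc hv))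
  have hasSum_conv : HasSum (fun n => (halfLineConv r)^[n + 1] p s)
      (halfLineConv r (volterraSolution r p) s) := by
    simp only [Function.iterate_succ_apply', halfLineConv]
    refine intervalIntegral.hasSum_integral_of_dominated_convergence
      (fun n v => |r v| * u n) (fun n => ?_) (fun n => ae_of_all _ fun v hv => ?_)
      (ae_of_all _ fun v _ => hu.mul_left _) ?_ (ae_of_all _ fun v hv => ?_)
    · have := continuous_iterate_halfLineConv hr hp n
      exact Continuous.aestronglyMeasurable (by fun_prop)
    · rw [norm_mul]
      exact mul_le_mul_of_nonneg_left (hle n _ (sub_mem_Icc v hv)) (norm_nonneg _)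
    · simp only [tsum_mul_left]
      exact Continuous.intervalIntegrable (by fun_prop) _ _
    · exact (summable_iterate _ (sub_mem_Icc v hv)).hasSum.mul_left _
  rw [volterraSolution, (summable_iterate s (abs_le.1 le_rfl)).tsum_eq_zero_add,
    hasSum_conv.tsum_eq]
  rfl

end Volterra

section CanonicalDensity

/-- The canonical density `k` of a weight `ω` on `(0,∞)` with `ω 0 = 1` and derivative `ω'`: the
solution of `s ω(s) = (ω * k)(s)`, so that `L(k) = -L(ω)' / L(ω)`. Differentiating this equation
turns it into the Volterra equation `h = -s ω' + (-ω') * h` for `h = 1 - k`. -/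
noncomputable def canonicalDensity (ω' : ℝ → ℝ) (s : ℝ) : ℝ :=
  1 - volterraSolution (fun v => -ω' v) (fun u => -(u * ω' u)) s

variable {ω ω' : ℝ → ℝ}

lemma continuous_canonicalDensity (hω' : Continuous ω') : Continuous (canonicalDensity ω') :=
  continuous_const.sub (continuous_volterraSolution hω'.neg (by fun_prop))

lemma canonicalDensity_le_one (hω'_nonpos : ∀ t, 0 ≤ t → ω' t ≤ 0) {s : ℝ} (hs : 0 ≤ s) :
    canonicalDensity ω' s ≤ 1 :=
  sub_le_self _ <| volterraSolution_nonneg (fun t ht => neg_nonneg.2 (hω'_nonpos t ht))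
    (fun t ht => neg_nonneg.2 (mul_nonpos_of_nonneg_of_nonpos ht (hω'_nonpos t ht))) hs

lemma integral_deriv_eq_sub_one (hω : ∀ t, HasDerivAt ω (ω' t) t) (hω' : Continuous ω')
    (hω0 : ω 0 = 1) (s : ℝ) : ∫ v in (0 : ℝ)..s, ω' v = ω s - 1 := by
  rw [intervalIntegral.integral_eq_sub_of_hasDerivAt (fun t _ => hω t)
    (hω'.intervalIntegrable _ _), hω0]

lemma canonicalDensity_eq (hω : ∀ t, HasDerivAt ω (ω' t) t) (hω' : Continuous ω')
    (hω0 : ω 0 = 1) (s : ℝ) :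
    canonicalDensity ω' s
      = ω s + s * ω' s - halfLineConv ω' (canonicalDensity ω') s := by
  set h := volterraSolution (fun v => -ω' v) fun u => -(u * ω' u) with hh
  have h_cont : Continuous h := continuous_volterraSolution hω'.neg (by fun_prop)
  have h_eq : h s = -(s * ω' s) - halfLineConv ω' h s := by
    rw [hh, volterraSolution_eq_add_halfLineConv hω'.fun_neg (by fun_prop), ← hh]
    simp only [halfLineConv, neg_mul, intervalIntegral.integral_neg, sub_eq_add_neg]
  have conv_eq : halfLineConv ω' (canonicalDensity ω') s = ω s - 1 - halfLineConv ω' h s := by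
    have split : canonicalDensity ω' = fun v => 1 + -1 * h v := by
      ext v; simp only [canonicalDensity, hh]; ring
    rw [halfLineConv_comm, split, halfLineConv_add_left continuous_const (by fun_prop) hω',
      halfLineConv_smul_left, halfLineConv_const_left, integral_deriv_eq_sub_one hω hω' hω0,
      halfLineConv_comm h]
    ring
  rw [conv_eq, canonicalDensity, ← hh, h_eq]
  ring

lemma halfLineConv_canonicalDensity (hω : ∀ t, HasDerivAt ω (ω' t) t) (hω' : Continuous ω')
    (hω0 : ω 0 = 1) {s : ℝ} (hs : 0 ≤ s) :
    halfLineConv ω (canonicalDensity ω') s = s * ω s := by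
  set k := canonicalDensity ω' with hk
  have k_cont : Continuous k := continuous_canonicalDensity hω'
  have ω_cont : Continuous ω := continuous_iff_continuousAt.2 fun t => (hω t).continuousAt
  have ω_eq : ω = fun v => 1 + ∫ w in (0 : ℝ)..v, ω' w := by
    ext v; rw [integral_deriv_eq_sub_one hω hω' hω0, add_sub_cancel]
  have primitive_cont : Continuous fun v => ∫ w in (0 : ℝ)..v, ω' w :=
    intervalIntegral.continuous_primitive (fun _ _ => hω'.intervalIntegrable _ _) 0
  have deriv_id_mul (u : ℝ) : HasDerivAt (fun u => u * ω u) (ω u + u * ω' u) u := by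
    simpa using (hasDerivAt_id' u).fun_mul (hω u)
  calc halfLineConv ω k s
      = (∫ u in (0 : ℝ)..s, k u) + ∫ u in (0 : ℝ)..s, halfLineConv ω' k u := by
        rw [ω_eq, halfLineConv_add_left continuous_const primitive_cont k_cont,
          halfLineConv_const_left, one_mul, ← integral_halfLineConv hω' k_cont hs]
    _ = ∫ u in (0 : ℝ)..s, (k u + halfLineConv ω' k u) :=
        (intervalIntegral.integral_add (k_cont.intervalIntegrable _ _)
          ((continuous_halfLineConv hω' k_cont).intervalIntegrable _ _)).symm
    _ = ∫ u in (0 : ℝ)..s, (ω u + u * ω' u) := by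
        simp only [hk, canonicalDensity_eq hω hω' hω0, sub_add_cancel]
    _ = s * ω s := by
        rw [intervalIntegral.integral_eq_sub_of_hasDerivAt (fun u _ => deriv_id_mul u)
          (Continuous.intervalIntegrable (by fun_prop) _ _), zero_mul, sub_zero]

-- Eliminating the explicit factor `s` between the equations for `k` and for `ω * k` leaves a
-- kernel that is nonpositive when `ω` is log-convex.
lemma mul_canonicalDensity_eq (hω : ∀ t, HasDerivAt ω (ω' t) t) (hω' : Continuous ω')
    (hω0 : ω 0 = 1) {s : ℝ} (hs : 0 ≤ s) :
    ω s * canonicalDensity ω' s = ω s ^ 2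
      - halfLineConv (fun v => ω s * ω' v - ω' s * ω v) (canonicalDensity ω') s := by
  have ω_cont : Continuous ω := continuous_iff_continuousAt.2 fun t => (hω t).continuousAt
  have kernel_eq : (fun v => ω s * ω' v - ω' s * ω v) = fun v => ω s * ω' v + -ω' s * ω v := by
    ext v; ring
  rw [kernel_eq, halfLineConv_add_left (by fun_prop) (by fun_prop)
    (continuous_canonicalDensity hω'), halfLineConv_smul_left, halfLineConv_smul_left,
    halfLineConv_canonicalDensity hω hω' hω0 hs, canonicalDensity_eq hω hω' hω0]
  ring

lemma nonneg_of_forall_pos_of_nonneg_Ico {k : ℝ → ℝ} (hk : Continuous k) (hk0 : 0 < k 0)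
    (step : ∀ s, 0 < s → (∀ u ∈ Ico 0 s, 0 ≤ k u) → 0 < k s) {s : ℝ} (hs : 0 ≤ s) :
    0 ≤ k s := by
  by_contra! hks
  set Z := {u | 0 ≤ u ∧ k u ≤ 0}
  have Z_closed : IsClosed Z := isClosed_Ici.inter (isClosed_le hk continuous_const)
  have Z_bdd : BddBelow Z := ⟨0, fun u hu => hu.1⟩
  obtain ⟨first_nonneg, k_first⟩ : sInf Z ∈ Z := Z_closed.csInf_mem ⟨s, hs, hks.le⟩ Z_bdd
  rcases first_nonneg.eq_or_lt with first_eq | first_pos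
  · exact hk0.not_ge (first_eq ▸ k_first)
  · refine (step _ first_pos fun u hu => ?_).not_ge k_first
    by_contra! hku
    exact hu.2.not_ge (csInf_le Z_bdd ⟨hu.1, hku.le⟩)

lemma canonicalDensity_pos_of_nonneg_Ico (hω : ∀ t, HasDerivAt ω (ω' t) t)
    (hω' : Continuous ω') (hω0 : ω 0 = 1) (hω'_nonpos : ∀ t, 0 ≤ t → ω' t ≤ 0) {s : ℝ}
    (hs : 0 ≤ s) (hωs : 0 < ω s)
    (kernel_lt : ∫ v in (0 : ℝ)..s, max (ω s * ω' v - ω' s * ω v) 0 < ω s ^ 2)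
    (nonneg_before : ∀ u ∈ Ico 0 s, 0 ≤ canonicalDensity ω' u) :
    0 < canonicalDensity ω' s := by
  have ω_cont : Continuous ω := continuous_iff_continuousAt.2 fun t => (hω t).continuousAt
  have k_cont := continuous_canonicalDensity hω'
  have conv_le : halfLineConv (fun v => ω s * ω' v - ω' s * ω v) (canonicalDensity ω') s
      ≤ ∫ v in (0 : ℝ)..s, max (ω s * ω' v - ω' s * ω v) 0 := by
    refine intervalIntegral.integral_mono_on_of_le_Ioo hs
      (Continuous.intervalIntegrable (by fun_prop) _ _)
      (Continuous.intervalIntegrable (by fun_prop) _ _) fun v hv => ?_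
    have k_nonneg := nonneg_before (s - v) ⟨sub_nonneg.2 hv.2.le, sub_lt_self s hv.1⟩
    have k_le_one := canonicalDensity_le_one hω'_nonpos (sub_nonneg.2 hv.2.le)
    exact (mul_le_mul_of_nonneg_right (le_max_left _ 0) k_nonneg).trans
      (mul_le_of_le_one_right (le_max_right _ 0) k_le_one)
  refine pos_of_mul_pos_right (a := ω s) ?_ hωs.le
  rw [mul_canonicalDensity_eq hω hω' hω0 hs]
  linarith

lemma canonicalDensity_nonneg (hω : ∀ t, HasDerivAt ω (ω' t) t) (hω' : Continuous ω')
    (hω0 : ω 0 = 1) (hω'_nonpos : ∀ t, 0 ≤ t → ω' t ≤ 0) (hω_pos : ∀ t, 0 < t → 0 < ω t)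
    (kernel_lt : ∀ s, 0 < s →
      ∫ v in (0 : ℝ)..s, max (ω s * ω' v - ω' s * ω v) 0 < ω s ^ 2)
    {s : ℝ} (hs : 0 ≤ s) : 0 ≤ canonicalDensity ω' s := by
  refine nonneg_of_forall_pos_of_nonneg_Ico (continuous_canonicalDensity hω') ?_
    (fun u hu => canonicalDensity_pos_of_nonneg_Ico hω hω' hω0 hω'_nonpos hu.le (hω_pos u hu)
      (kernel_lt u hu)) hs
  rw [canonicalDensity_eq hω hω' hω0]
  simp [halfLineConv, hω0]

theorem logCompletelyMonotonic_laplaceTransform_of_kernel_lt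
    (hω : ∀ t, HasDerivAt ω (ω' t) t) (hω' : Continuous ω') (hω0 : ω 0 = 1)
    (hω'_nonpos : ∀ t, 0 ≤ t → ω' t ≤ 0) (hω_pos : ∀ t, 0 < t → 0 < ω t)
    (kernel_lt : ∀ s, 0 < s →
      ∫ v in (0 : ℝ)..s, max (ω s * ω' v - ω' s * ω v) 0 < ω s ^ 2) :
    LogCompletelyMonotonic (LaplaceTransform ω) := by
  set k := canonicalDensity ω'
  have ω_cont : Continuous ω := continuous_iff_continuousAt.2 fun t => (hω t).continuousAt
  have k_cont : Continuous k := continuous_canonicalDensity hω'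
  have k_nonneg (t : ℝ) (ht : 0 < t) : 0 ≤ k t :=
    canonicalDensity_nonneg hω hω' hω0 hω'_nonpos hω_pos kernel_lt ht.le
  have ω_le_one (t : ℝ) (ht : 0 < t) : ω t ≤ 1 := by
    have integral_nonneg : 0 ≤ ∫ v in (0 : ℝ)..t, -ω' v :=
      intervalIntegral.integral_nonneg ht.le fun v hv => neg_nonneg.2 (hω'_nonpos v hv.1)
    rw [intervalIntegral.integral_neg, integral_deriv_eq_sub_one hω hω' hω0] at integral_nonneg
    linarith
  have ω_nonneg (t : ℝ) (ht : 0 < t) : 0 ≤ ω t := (hω_pos t ht).le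
  have ω_int : LaplaceIntegrable ω := laplaceIntegrable_of_abs_le ω_cont.measurable (C := 1)
    fun t ht => by rw [abs_of_nonneg (ω_nonneg t ht)]; exact ω_le_one t ht
  have k_int : LaplaceIntegrable k := laplaceIntegrable_of_abs_le k_cont.measurable (C := 1)
    fun t ht => by
      rw [abs_of_nonneg (k_nonneg t ht)]; exact canonicalDensity_le_one hω'_nonpos ht.le
  refine ⟨fun x hx => laplaceTransform_pos hω_pos ω_int hx, fun x hx =>
    contDiffAt_laplaceTransform ω_cont.measurable ω_nonneg ω_int hx, CompletelyMonotonic.congr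
    (completelyMonotonic_laplaceTransform k_cont.measurable k_nonneg k_int) fun x hx => ?_⟩
  have deriv_eq : deriv (LaplaceTransform ω) x = -LaplaceTransform (fun t => t * ω t) x := by
    simpa using iteratedDeriv_laplaceTransform ω_cont.measurable ω_nonneg ω_int 1 hx
  have conv_eq : LaplaceTransform (fun t => t * ω t) x = LaplaceTransform (halfLineConv ω k) x :=
    setIntegral_congr_fun measurableSet_Ioi fun t (ht : 0 < t) => by
      simp only [k, halfLineConv_canonicalDensity hω hω' hω0 ht.le]
  rw [deriv_eq, neg_neg, conv_eq, laplaceTransform_halfLineConv ω_int k_int hx,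
    mul_div_cancel_left₀ _ (laplaceTransform_pos hω_pos ω_int hx).ne']

end CanonicalDensity

section RationalWeight

lemma integral_max_zero_nonneg (c : ℝ) : 0 ≤ ∫ u in (0 : ℝ)..c, max u 0 := by
  rcases le_total 0 c with hc | hc
  · exact intervalIntegral.integral_nonneg hc fun u _ => le_max_right u 0
  · rw [intervalIntegral.integral_congr (g := 0) fun u hu => ?_]
    · exact intervalIntegral.integral_zero.ge
    · rw [uIcc_of_ge hc] at hu
      exact max_eq_right hu.2

lemma integral_max_zero_le_half (c : ℝ) : ∫ u in c..(1 : ℝ), max u 0 ≤ 1 / 2 := by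
  have integrable (x y : ℝ) : IntervalIntegrable (fun u : ℝ => max u 0) volume x y :=
    Continuous.intervalIntegrable (by fun_prop) _ _
  have integral_unit : ∫ u in (0 : ℝ)..1, max u 0 = 1 / 2 := by
    rw [intervalIntegral.integral_congr (g := id) fun u hu => ?_]
    · simp only [id, integral_id]; norm_num
    · rw [uIcc_of_le zero_le_one] at hu
      exact max_eq_left hu.1
  rw [← intervalIntegral.integral_interval_sub_left (integrable 0 1) (integrable 0 c),
    integral_unit]
  linarith [integral_max_zero_nonneg c]

lemma integral_sub_mul_max_lt {a s : ℝ} (ha : 0 < a) (hs : 0 < s) :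
    ∫ v in (0 : ℝ)..s, (s - v) * max (1 - a * s * v) 0 < 1 / (2 * a) := by
  have strict : ∫ v in (0 : ℝ)..s, (s - v) * max (1 - a * s * v) 0
      < ∫ v in (0 : ℝ)..s, s * max (1 - a * s * v) 0 := by
    refine intervalIntegral.integral_lt_integral_of_continuousOn_of_le_of_exists_lt hs
      (by fun_prop) (by fun_prop)
      (fun v hv => mul_le_mul_of_nonneg_right (sub_le_self s hv.1.le) (le_max_right _ 0))
      ⟨s / (1 + a * s ^ 2), ⟨by positivity, div_le_self hs.le ?_⟩, ?_⟩
    · exact le_add_of_nonneg_right (by positivity)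
    · have factor_pos : 0 < 1 - a * s * (s / (1 + a * s ^ 2)) := by
        have : 1 - a * s * (s / (1 + a * s ^ 2)) = 1 / (1 + a * s ^ 2) := by field_simp; ring
        rw [this]; positivity
      exact mul_lt_mul_of_pos_right (sub_lt_self s (by positivity)) (lt_max_of_lt_left factor_pos)
  calc _ < ∫ v in (0 : ℝ)..s, s * max (1 - a * s * v) 0 := strict
    _ = 1 / a * ∫ u in (1 - a * s * s)..1, max u 0 := by
        rw [intervalIntegral.integral_const_mul,
          intervalIntegral.integral_comp_sub_mul (fun u => max u 0) (by positivity), mul_zero,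
          sub_zero, smul_eq_mul]
        field_simp
    _ ≤ 1 / a * (1 / 2) := by gcongr; exact integral_max_zero_le_half _
    _ = 1 / (2 * a) := by field_simp

/-- The weight `ω(t) = (1 + b t²) / (1 + a t²)`. -/
noncomputable def rationalWeight (a b t : ℝ) : ℝ := (1 + b * t ^ 2) / (1 + a * t ^ 2)

/-- The derivative of `rationalWeight a b`, in closed form. -/
noncomputable def rationalWeightDeriv (a b t : ℝ) : ℝ :=
  -(2 * (a - b) * t) / (1 + a * t ^ 2) ^ 2

variable {a b : ℝ}

lemma hasDerivAt_rationalWeight (ha : 0 ≤ a) (b t : ℝ) :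
    HasDerivAt (rationalWeight a b) (rationalWeightDeriv a b t) t := by
  have deriv_quadratic (c : ℝ) : HasDerivAt (fun t => 1 + c * t ^ 2) (2 * c * t) t := by
    refine (((hasDerivAt_pow 2 t).const_mul c).const_add 1).congr_deriv ?_
    push_cast; ring
  refine ((deriv_quadratic b).fun_div (deriv_quadratic a) (by positivity)).congr_deriv ?_
  rw [rationalWeightDeriv]
  ring

lemma continuous_rationalWeightDeriv (ha : 0 ≤ a) (b : ℝ) :
    Continuous (rationalWeightDeriv a b) :=
  Continuous.div (by fun_prop) (by fun_prop) fun t => by positivity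

lemma rationalWeightDeriv_nonpos (hba : b ≤ a) {t : ℝ} (ht : 0 ≤ t) :
    rationalWeightDeriv a b t ≤ 0 :=
  div_nonpos_of_nonpos_of_nonneg
    (neg_nonpos.2 (mul_nonneg (mul_nonneg zero_le_two (sub_nonneg.2 hba)) ht)) (sq_nonneg _)

lemma rationalWeight_pos (hb : 0 ≤ b) (ha : 0 ≤ a) (t : ℝ) : 0 < rationalWeight a b t := by
  unfold rationalWeight
  positivity

lemma rationalWeight_kernel_eq (ha : 0 ≤ a) (b s v : ℝ) :
    rationalWeight a b s * rationalWeightDeriv a b v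
        - rationalWeightDeriv a b s * rationalWeight a b v
      = 2 * (a - b) / (1 + a * v ^ 2) ^ 2 / (1 + a * s ^ 2) ^ 2 *
        ((s - v) * (1 - (a + b) * s * v - a * b * (s * v) * (s ^ 2 + s * v + v ^ 2))) := by
  rw [rationalWeight, rationalWeight, rationalWeightDeriv, rationalWeightDeriv]
  field_simp
  ring

lemma max_rationalWeight_kernel_le (hb : 0 ≤ b) (hba : b ≤ a) {s v : ℝ} (hv : 0 ≤ v)
    (hvs : v ≤ s) :
    max (rationalWeight a b s * rationalWeightDeriv a b v
        - rationalWeightDeriv a b s * rationalWeight a b v) 0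
      ≤ 2 * a / (1 + a * s ^ 2) ^ 2 * ((s - v) * max (1 - a * s * v) 0) := by
  have ha : 0 ≤ a := hb.trans hba
  have hs : 0 ≤ s := hv.trans hvs
  have : 0 ≤ s - v := sub_nonneg.2 hvs
  have : 0 ≤ a - b := sub_nonneg.2 hba
  have prefactor_le : 2 * (a - b) / (1 + a * v ^ 2) ^ 2 ≤ 2 * a := by
    rw [div_le_iff₀ (by positivity)]
    calc 2 * (a - b) ≤ 2 * a := by linarith
      _ ≤ 2 * a * (1 + a * v ^ 2) ^ 2 := le_mul_of_one_le_right (by positivity)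
          (one_le_pow₀ (le_add_of_nonneg_right (by positivity)))
  have bracket_le : 1 - (a + b) * s * v - a * b * (s * v) * (s ^ 2 + s * v + v ^ 2)
      ≤ max (1 - a * s * v) 0 := by
    refine le_max_of_le_left ?_
    have : 0 ≤ b * (s * v) := by positivity
    have : 0 ≤ a * b * (s * v) * (s ^ 2 + s * v + v ^ 2) := by positivity
    linarith
  refine max_le ?_ (by positivity)
  rw [rationalWeight_kernel_eq ha]
  calc _ ≤ 2 * (a - b) / (1 + a * v ^ 2) ^ 2 / (1 + a * s ^ 2) ^ 2 *
          ((s - v) * max (1 - a * s * v) 0) := by gcongr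
    _ ≤ 2 * a / (1 + a * s ^ 2) ^ 2 * ((s - v) * max (1 - a * s * v) 0) := by gcongr

lemma integral_max_rationalWeight_kernel_lt (hb : 0 ≤ b) (hba : b ≤ a) (ha : 0 < a) {s : ℝ}
    (hs : 0 < s) :
    ∫ v in (0 : ℝ)..s, max (rationalWeight a b s * rationalWeightDeriv a b v
        - rationalWeightDeriv a b s * rationalWeight a b v) 0 < rationalWeight a b s ^ 2 := by
  have weight_cont : Continuous (rationalWeight a b) :=
    continuous_iff_continuousAt.2 fun t => (hasDerivAt_rationalWeight ha.le b t).continuousAt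
  have deriv_cont := continuous_rationalWeightDeriv ha.le b
  calc _ ≤ ∫ v in (0 : ℝ)..s,
          2 * a / (1 + a * s ^ 2) ^ 2 * ((s - v) * max (1 - a * s * v) 0) :=
        intervalIntegral.integral_mono_on hs.le (Continuous.intervalIntegrable (by fun_prop) _ _)
          (Continuous.intervalIntegrable (by fun_prop) _ _)
          fun v hv => max_rationalWeight_kernel_le hb hba hv.1 hv.2
    _ < 2 * a / (1 + a * s ^ 2) ^ 2 * (1 / (2 * a)) := by
        rw [intervalIntegral.integral_const_mul]
        exact mul_lt_mul_of_pos_left (integral_sub_mul_max_lt ha hs) (by positivity)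
    _ = (1 / (1 + a * s ^ 2)) ^ 2 := by field_simp
    _ ≤ rationalWeight a b s ^ 2 := by
        unfold rationalWeight
        gcongr
        exact le_add_of_nonneg_right (by positivity)

theorem logCompletelyMonotonic_laplaceTransform_rationalWeight (hb : 0 ≤ b) (hba : b ≤ a)
    (ha : 0 < a) : LogCompletelyMonotonic (LaplaceTransform (rationalWeight a b)) :=
  logCompletelyMonotonic_laplaceTransform_of_kernel_lt (hasDerivAt_rationalWeight ha.le b)
    (continuous_rationalWeightDeriv ha.le b) (by simp [rationalWeight])
    (fun _ ht => rationalWeightDeriv_nonpos hba ht) (fun t _ => rationalWeight_pos hb ha.le t)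
    fun _ hs => integral_max_rationalWeight_kernel_lt hb hba ha hs

end RationalWeight

section Stieltjes

variable {μ : Measure ℝ} {lam x : ℝ}

lemma integral_rpow_mul_exp_neg_eq (hlam : 0 < lam) {y : ℝ} (hy : 0 < y) :
    ∫ t in Ioi (0 : ℝ), t ^ (lam - 1) / Real.Gamma lam * Real.exp (-(y * t)) = y ^ (-lam) := by
  simp only [div_mul_eq_mul_div, integral_div]
  rw [Real.integral_rpow_mul_exp_neg_mul_Ioi hlam hy,
    mul_div_cancel_right₀ _ (Real.Gamma_pos_of_pos hlam).ne', one_div, Real.inv_rpow hy.le,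
    Real.rpow_neg hy.le]

lemma integrableOn_rpow_mul_exp_neg (hlam : 0 < lam) {y : ℝ} (hy : 0 < y) :
    IntegrableOn (fun t => t ^ (lam - 1) / Real.Gamma lam * Real.exp (-(y * t))) (Ioi 0) :=
  Integrable.of_integral_ne_zero <| by
    rw [integral_rpow_mul_exp_neg_eq hlam hy]
    positivity

lemma integrable_prod_rpow_mul_exp_neg [SFinite μ] (hlam : 0 < lam) (hμ : μ (Iio 0) = 0)
    (hx : 0 < x) (hint : Integrable (fun s => (x + s) ^ (-lam)) μ) :
    Integrable
      (fun z : ℝ × ℝ => z.1 ^ (lam - 1) / Real.Gamma lam * Real.exp (-((x + z.2) * z.1)))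
      ((volume.restrict (Ioi 0)).prod μ) := by
  have ae_nonneg : ∀ᵐ s ∂μ, 0 ≤ s := by
    filter_upwards [measure_eq_zero_iff_ae_notMem.1 hμ] with s hs using not_lt.1 hs
  rw [integrable_prod_iff' (Measurable.aestronglyMeasurable (by fun_prop))]
  constructor
  · filter_upwards [ae_nonneg] with s hs
    exact integrableOn_rpow_mul_exp_neg hlam (by positivity)
  · refine hint.congr ?_
    filter_upwards [ae_nonneg] with s hs
    rw [← integral_rpow_mul_exp_neg_eq hlam (by positivity : 0 < x + s)]
    refine setIntegral_congr_fun measurableSet_Ioi fun t (ht : 0 < t) => ?_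
    have := Real.Gamma_pos_of_pos hlam
    exact (Real.norm_of_nonneg (by positivity)).symm

-- Since `(x + s)^(-λ)` is the Laplace transform of `t^(λ-1) e^(-st) / Γ(λ)`, this is Fubini.
lemma laplaceTransform_eq_integral_rpow [SFinite μ] (hlam : 0 < lam) (hμ : μ (Iio 0) = 0)
    {g : ℝ → ℝ} (hg : ∀ t, 0 < t →
      g t = t ^ (lam - 1) / Real.Gamma lam * ∫ s, Real.exp (-t * s) ∂μ)
    (hx : 0 < x) (hint : Integrable (fun s => (x + s) ^ (-lam)) μ) :
    LaplaceTransform g x = ∫ s, (x + s) ^ (-lam) ∂μ := by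
  calc LaplaceTransform g x
      = ∫ t in Ioi (0 : ℝ), ∫ s,
          t ^ (lam - 1) / Real.Gamma lam * Real.exp (-((x + s) * t)) ∂μ := by
        refine setIntegral_congr_fun measurableSet_Ioi fun t (ht : 0 < t) => ?_
        simp only [hg t ht, ← integral_const_mul]
        refine integral_congr_ae (ae_of_all _ fun s => ?_)
        have exp_split : Real.exp (-((x + s) * t)) = Real.exp (-x * t) * Real.exp (-t * s) := by
          rw [← Real.exp_add]; ring_nf
        simp only [exp_split]
        ring
    _ = ∫ s, (∫ t in Ioi (0 : ℝ),
          t ^ (lam - 1) / Real.Gamma lam * Real.exp (-((x + s) * t))) ∂μ :=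
        integral_integral_swap (integrable_prod_rpow_mul_exp_neg hlam hμ hx hint)
    _ = ∫ s, (x + s) ^ (-lam) ∂μ := by
        refine integral_congr_ae ?_
        filter_upwards [measure_eq_zero_iff_ae_notMem.1 hμ] with s hs
        exact integral_rpow_mul_exp_neg_eq hlam (add_pos_of_pos_of_nonneg hx (not_lt.1 hs))

end Stieltjes

section CosineDensity

/-- The density `1 - γ cos (c s)`; with `γ = 1 - b / a` and `c = 1 / √a` its Laplace transform is
`t ↦ ω(t) / t` for `ω = rationalWeight a b`, so it is the Stieltjes density of `L(ω)`. -/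
noncomputable def cosDensity (γ c s : ℝ) : ℝ := 1 - γ * Real.cos (c * s)

variable {γ : ℝ}

lemma continuous_cosDensity (γ c : ℝ) : Continuous (cosDensity γ c) := by
  unfold cosDensity
  fun_prop

lemma cosDensity_mem_Icc (hγ : γ ∈ Icc (0 : ℝ) 1) (c s : ℝ) :
    cosDensity γ c s ∈ Icc (0 : ℝ) 2 := by
  obtain ⟨hγ0, hγ1⟩ := hγ
  have lower := mul_le_mul_of_nonneg_left (Real.neg_one_le_cos (c * s)) hγ0
  have upper := mul_le_mul_of_nonneg_left (Real.cos_le_one (c * s)) hγ0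
  unfold cosDensity
  constructor <;> linarith

lemma integral_exp_neg_mul_cos {t : ℝ} (ht : 0 < t) (c : ℝ) :
    ∫ s in Ioi (0 : ℝ), Real.exp (-t * s) * Real.cos (c * s) = t / (t ^ 2 + c ^ 2) := by
  have re_neg : (-t + c * Complex.I).re < 0 := by simpa using ht
  have integrand_eq (s : ℝ) : Real.exp (-t * s) * Real.cos (c * s)
      = RCLike.re (Complex.exp ((-t + c * Complex.I) * s)) := by
    simp [Complex.exp_re]
  have normSq_eq : Complex.normSq (-t + c * Complex.I) = t ^ 2 + c ^ 2 := by
    rw [← Complex.ofReal_neg, Complex.normSq_add_mul_I, neg_sq]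
  simp only [integrand_eq]
  rw [integral_re (integrableOn_exp_mul_complex_Ioi re_neg 0),
    integral_exp_mul_complex_Ioi re_neg 0]
  simp [Complex.div_re, normSq_eq]

lemma laplaceTransform_cosDensity {t : ℝ} (ht : 0 < t) (γ c : ℝ) :
    LaplaceTransform (cosDensity γ c) t = 1 / t - γ * (t / (t ^ 2 + c ^ 2)) := by
  have integrable_exp : IntegrableOn (fun s => Real.exp (-t * s)) (Ioi 0) :=
    integrableOn_exp_mul_Ioi (neg_lt_zero.2 ht) 0
  have integrable_cos : IntegrableOn (fun s => Real.exp (-t * s) * Real.cos (c * s)) (Ioi 0) :=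
    laplaceIntegrable_of_abs_le (by fun_prop) (fun s _ => Real.abs_cos_le_one (c * s)) t ht
  simp only [LaplaceTransform, cosDensity, mul_sub, mul_one, mul_left_comm _ γ]
  rw [integral_sub integrable_exp (integrable_cos.const_mul γ), integral_const_mul,
    integral_exp_neg_mul_cos ht, integral_exp_mul_Ioi (neg_lt_zero.2 ht)]
  simp

lemma integrableOn_mul_cosDensity (hγ : γ ∈ Icc (0 : ℝ) 1) (c : ℝ) {f : ℝ → ℝ}
    (hf : IntegrableOn f (Ioi 0)) : IntegrableOn (fun s => f s * cosDensity γ c s) (Ioi 0) := by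
  refine Integrable.mul_bdd (c := 2) hf (continuous_cosDensity γ c).aestronglyMeasurable
    (ae_of_all _ fun s => ?_)
  rw [Real.norm_of_nonneg (cosDensity_mem_Icc hγ c s).1]
  exact (cosDensity_mem_Icc hγ c s).2

end CosineDensity

section SineCosineIntegral

variable {c x y : ℝ}

lemma integral_Ioi_inv_add_sq (hx : 0 < x) : ∫ s in Ioi (0 : ℝ), ((x + s) ^ 2)⁻¹ = 1 / x := by
  have hasDerivAt_primitive (s : ℝ) (hs : s ∈ Ici 0) :
      HasDerivAt (fun s => -(x + s)⁻¹) ((x + s) ^ 2)⁻¹ s := by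
    have hxs : x + s ≠ 0 := (add_pos_of_pos_of_nonneg hx hs).ne'
    exact (((hasDerivAt_id' s).const_add x).fun_inv hxs).fun_neg.congr_deriv (by ring)
  have tendsto_primitive : Tendsto (fun s => -(x + s)⁻¹) atTop (nhds 0) := by
    simpa using (tendsto_atTop_add_const_left _ x tendsto_id).inv_tendsto_atTop.neg
  rw [integral_Ioi_of_hasDerivAt_of_nonneg' hasDerivAt_primitive (fun s _ => by positivity)
    tendsto_primitive]
  simp

lemma integrableOn_Ioi_inv_add_sq (hx : 0 < x) :
    IntegrableOn (fun s => ((x + s) ^ 2)⁻¹) (Ioi 0) :=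
  Integrable.of_integral_ne_zero <| by
    rw [integral_Ioi_inv_add_sq hx]
    positivity

lemma integrableOn_Ioi_inv_add_sq_mul_one_sub_cos (hx : 0 < x) (c : ℝ) :
    IntegrableOn (fun s => ((x + s) ^ 2)⁻¹ * (1 - Real.cos (c * s))) (Ioi 0) := by
  simpa only [cosDensity, one_mul] using
    integrableOn_mul_cosDensity ⟨zero_le_one, le_rfl⟩ c (integrableOn_Ioi_inv_add_sq hx)

lemma integral_inv_add_mul_sin_eq_by_parts (hy : 0 < y) {T : ℝ} (hT : 0 ≤ T) :
    ∫ u in (0 : ℝ)..T, (y + u)⁻¹ * Real.sin u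
      = (y + T)⁻¹ * (1 - Real.cos T)
        + ∫ u in (0 : ℝ)..T, ((y + u) ^ 2)⁻¹ * (1 - Real.cos u) := by
  have add_ne_zero (u : ℝ) (hu : u ∈ uIcc 0 T) : y + u ≠ 0 := by
    rw [uIcc_of_le hT] at hu
    exact (add_pos_of_pos_of_nonneg hy hu.1).ne'
  have deriv_inv (u : ℝ) (hu : u ∈ uIcc 0 T) :
      HasDerivAt (fun u => (y + u)⁻¹) (-((y + u) ^ 2)⁻¹) u :=
    (((hasDerivAt_id' u).const_add y).fun_inv (add_ne_zero u hu)).congr_deriv (by ring)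
  have deriv_one_sub_cos (u : ℝ) (_ : u ∈ uIcc 0 T) :
      HasDerivAt (fun u => 1 - Real.cos u) (Real.sin u) u := by
    simpa using (Real.hasDerivAt_cos u).const_sub 1
  have integrable_deriv_inv :
      IntervalIntegrable (fun u => -((y + u) ^ 2)⁻¹) volume 0 T :=
    (ContinuousOn.inv₀ (by fun_prop) fun u hu =>
      pow_ne_zero 2 (add_ne_zero u hu)).neg.intervalIntegrable
  rw [intervalIntegral.integral_mul_deriv_eq_deriv_mul deriv_inv deriv_one_sub_cos
    integrable_deriv_inv (Real.continuous_sin.intervalIntegrable _ _)]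
  simp

lemma integral_inv_add_mul_sin_eq (hy : 0 < y) {T : ℝ} (hT : 0 ≤ T) :
    ∫ u in (0 : ℝ)..T, (y + u)⁻¹ * Real.sin u
      = Real.cos y * (∫ t in y..(y + T), Real.sin t / t)
        - Real.sin y * ∫ t in y..(y + T), Real.cos t / t := by
  have integrable_div {f : ℝ → ℝ} (hf : Continuous f) :
      IntervalIntegrable (fun t => f t / t) volume y (y + T) := by
    refine (hf.continuousOn.div continuousOn_id fun t ht => ?_).intervalIntegrable
    rw [uIcc_of_le (le_add_of_nonneg_right hT)] at ht
    exact (hy.trans_le ht.1).ne'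
  have shift := intervalIntegral.integral_comp_add_left (a := 0) (b := T)
    (fun t => t⁻¹ * Real.sin (t - y)) y
  simp only [add_sub_cancel_left, add_zero] at shift
  rw [shift, ← intervalIntegral.integral_const_mul, ← intervalIntegral.integral_const_mul,
    ← intervalIntegral.integral_sub ((integrable_div Real.continuous_sin).const_mul _)
      ((integrable_div Real.continuous_cos).const_mul _)]
  refine intervalIntegral.integral_congr fun t _ => ?_
  simp only [Real.sin_sub]
  ring

lemma tendsto_inv_add_mul_one_sub_cos (y : ℝ) :
    Tendsto (fun T => (y + T)⁻¹ * (1 - Real.cos T)) atTop (nhds 0) := by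
  refine Tendsto.zero_mul_isBoundedUnder_le
    (tendsto_atTop_add_const_left _ y tendsto_id).inv_tendsto_atTop
    (isBoundedUnder_of ⟨2, fun T => ?_⟩)
  rw [Function.comp_apply, Real.norm_of_nonneg (sub_nonneg.2 (Real.cos_le_one T))]
  linarith [Real.neg_one_le_cos T]

lemma integral_Ioi_inv_add_sq_mul_one_sub_cos (hy : 0 < y) {S C : ℝ}
    (hS : Tendsto (fun R => ∫ t in y..R, Real.sin t / t) atTop (nhds S))
    (hC : Tendsto (fun R => ∫ t in y..R, Real.cos t / t) atTop (nhds C)) :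
    ∫ u in Ioi (0 : ℝ), ((y + u) ^ 2)⁻¹ * (1 - Real.cos u)
      = Real.cos y * S - Real.sin y * C := by
  have tendsto_add : Tendsto (fun T => y + T) atTop atTop :=
    tendsto_atTop_add_const_left _ y tendsto_id
  have integrable := integrableOn_Ioi_inv_add_sq_mul_one_sub_cos hy 1
  simp only [one_mul] at integrable
  have tendsto_parts := (tendsto_inv_add_mul_one_sub_cos y).add
    (intervalIntegral_tendsto_integral_Ioi 0 integrable tendsto_id)
  rw [zero_add] at tendsto_parts
  refine tendsto_nhds_unique (tendsto_parts.congr' ?_)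
    (((hS.comp tendsto_add).const_mul _).sub ((hC.comp tendsto_add).const_mul _))
  filter_upwards [eventually_ge_atTop 0] with T hT
  simp only [id, Function.comp_apply, ← integral_inv_add_mul_sin_eq hy hT,
    integral_inv_add_mul_sin_eq_by_parts hy hT]

lemma integral_Ioi_inv_add_sq_mul_one_sub_cos_mul (hc : 0 < c) (x : ℝ) :
    ∫ s in Ioi (0 : ℝ), ((x + s) ^ 2)⁻¹ * (1 - Real.cos (c * s))
      = c * ∫ u in Ioi (0 : ℝ), ((c * x + u) ^ 2)⁻¹ * (1 - Real.cos u) := by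
  have substitution := integral_comp_mul_left_Ioi
    (fun u => ((c * x + u) ^ 2)⁻¹ * (1 - Real.cos u)) 0 hc
  have integrand_eq (s : ℝ) : ((x + s) ^ 2)⁻¹ * (1 - Real.cos (c * s))
      = c ^ 2 * (((c * x + c * s) ^ 2)⁻¹ * (1 - Real.cos (c * s))) := by
    rw [← mul_add, mul_pow, mul_inv]
    field_simp
  simp only [integrand_eq, integral_const_mul]
  rw [substitution, mul_zero, smul_eq_mul]
  field_simp

lemma integral_Ioi_inv_add_sq_mul_cosDensity (hc : 0 < c) (hx : 0 < x) (γ : ℝ) :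
    ∫ s in Ioi (0 : ℝ), ((x + s) ^ 2)⁻¹ * cosDensity γ c s
      = (1 - γ) * (1 / x)
        + γ * c * ∫ u in Ioi (0 : ℝ), ((c * x + u) ^ 2)⁻¹ * (1 - Real.cos u) := by
  have integrand_eq (s : ℝ) : ((x + s) ^ 2)⁻¹ * cosDensity γ c s
      = (1 - γ) * ((x + s) ^ 2)⁻¹ + γ * (((x + s) ^ 2)⁻¹ * (1 - Real.cos (c * s))) := by
    unfold cosDensity
    ring
  simp only [integrand_eq]
  rw [integral_add ((integrableOn_Ioi_inv_add_sq hx).const_mul _)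
    ((integrableOn_Ioi_inv_add_sq_mul_one_sub_cos hx c).const_mul _), integral_const_mul,
    integral_const_mul, integral_Ioi_inv_add_sq hx,
    integral_Ioi_inv_add_sq_mul_one_sub_cos_mul hc, mul_assoc]

end SineCosineIntegral

section StieltjesRepresentation

variable {a b γ x : ℝ}

lemma rpow_neg_two (y : ℝ) : y ^ (-2 : ℝ) = (y ^ 2)⁻¹ := by
  rw [Real.rpow_neg_ofNat, zpow_neg, zpow_ofNat]

lemma integrable_rpow_neg_two_halfLineMeasure_cosDensity (hγ : γ ∈ Icc (0 : ℝ) 1) (c : ℝ)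
    (hx : 0 < x) :
    Integrable (fun s => (x + s) ^ (-2 : ℝ)) (halfLineMeasure (cosDensity γ c)) := by
  rw [integrable_halfLineMeasure_iff (continuous_cosDensity γ c).measurable
    fun s _ => (cosDensity_mem_Icc hγ c s).1]
  simpa only [rpow_neg_two] using
    integrableOn_mul_cosDensity hγ c (integrableOn_Ioi_inv_add_sq hx)

lemma one_sub_div_mem_Icc (hb : 0 ≤ b) (hba : b ≤ a) (ha : 0 < a) :
    1 - b / a ∈ Icc (0 : ℝ) 1 :=
  ⟨sub_nonneg.2 ((div_le_one ha).2 hba), sub_le_self _ (by positivity)⟩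

lemma rationalWeight_eq_mul_laplaceTransform (ha : 0 < a) (b : ℝ) {t : ℝ} (ht : 0 < t) :
    rationalWeight a b t
      = t * LaplaceTransform (cosDensity (1 - b / a) (1 / Real.sqrt a)) t := by
  rw [laplaceTransform_cosDensity ht, div_pow, Real.sq_sqrt ha.le, rationalWeight]
  have denom_eq : t ^ 2 + 1 ^ 2 / a = (1 + a * t ^ 2) / a := by field_simp; ring
  rw [denom_eq]
  field_simp
  ring

lemma laplaceTransform_rationalWeight_eq_integral (hb : 0 ≤ b) (hba : b ≤ a) (ha : 0 < a)
    (hx : 0 < x) :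
    LaplaceTransform (rationalWeight a b) x = ∫ s, (x + s) ^ (-2 : ℝ)
      ∂halfLineMeasure (cosDensity (1 - b / a) (1 / Real.sqrt a)) := by
  have hγ := one_sub_div_mem_Icc hb hba ha
  refine laplaceTransform_eq_integral_rpow two_pos
    (halfLineMeasure_Iio_zero _) (fun t ht => ?_) hx
    (integrable_rpow_neg_two_halfLineMeasure_cosDensity hγ _ hx)
  have prefactor_eq : t ^ ((2 : ℝ) - 1) / Real.Gamma 2 = t := by
    rw [Real.Gamma_two, div_one, ← one_add_one_eq_two, add_sub_cancel_right, Real.rpow_one]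
  rw [rationalWeight_eq_mul_laplaceTransform ha b ht, prefactor_eq, integral_halfLineMeasure
    (continuous_cosDensity _ _).measurable fun s _ => (cosDensity_mem_Icc hγ _ s).1,
    LaplaceTransform]

theorem isGenStieltjes_laplaceTransform_rationalWeight (hb : 0 ≤ b) (hba : b ≤ a)
    (ha : 0 < a) : IsGenStieltjes 2 (LaplaceTransform (rationalWeight a b)) :=
  ⟨halfLineMeasure (cosDensity (1 - b / a) (1 / Real.sqrt a)), 0, le_rfl,
    halfLineMeasure_Iio_zero _, fun _ hx =>
      ⟨integrable_rpow_neg_two_halfLineMeasure_cosDensity (one_sub_div_mem_Icc hb hba ha) _ hx,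
        by rw [add_zero, laplaceTransform_rationalWeight_eq_integral hb hba ha hx]⟩⟩

theorem laplaceTransform_rationalWeight_eq (hb : 0 ≤ b) (hba : b ≤ a) (ha : 0 < a)
    (hx : 0 < x) :
    LaplaceTransform (rationalWeight a b) x
      = b / a * (1 / x) + (1 - b / a) * (1 / Real.sqrt a) *
        ∫ u in Ioi (0 : ℝ), ((x / Real.sqrt a + u) ^ 2)⁻¹ * (1 - Real.cos u) := by
  rw [laplaceTransform_rationalWeight_eq_integral hb hba ha hx, integral_halfLineMeasure
    (continuous_cosDensity _ _).measurable
    fun s _ => (cosDensity_mem_Icc (one_sub_div_mem_Icc hb hba ha) _ s).1]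
  simp only [rpow_neg_two]
  rw [integral_Ioi_inv_add_sq_mul_cosDensity (by positivity) hx, sub_sub_cancel,
    one_div_mul_eq_div (Real.sqrt a) x]

end StieltjesRepresentation

/-- Theorem: for `a ≥ b ≥ 0`, `a > 0`, the Laplace transform of `ω(x) = (1+bx²)/(1+ax²)` is a
generalized Stieltjes function of order 2 (hence logarithmically completely monotonic, i.e. `ω`
is infinitely divisible), and it equals
`(b/a)(1/x) + (1-b/a)(1/√a)(ci(x/√a) sin(x/√a) - si(x/√a) cos(x/√a))`, where
`si(x) = -∫ₓ^∞ sin t/t dt` and `ci(x) = -∫ₓ^∞ cos t/t dt` (as improper integrals). -/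
theorem stmt10 (a b : ℝ) (hb : 0 ≤ b) (hba : b ≤ a) (ha : 0 < a)
    (si ci : ℝ → ℝ)
    (hsi : ∀ x : ℝ, 0 < x →
      Tendsto (fun R => ∫ t in x..R, Real.sin t / t) atTop (nhds (- si x)))
    (hci : ∀ x : ℝ, 0 < x →
      Tendsto (fun R => ∫ t in x..R, Real.cos t / t) atTop (nhds (- ci x))) :
    IsGenStieltjes 2 (LaplaceTransform (fun x => (1 + b * x ^ 2) / (1 + a * x ^ 2))) ∧
    LogCompletelyMonotonic
      (LaplaceTransform (fun x => (1 + b * x ^ 2) / (1 + a * x ^ 2))) ∧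
    ∀ x : ℝ, 0 < x →
      LaplaceTransform (fun x => (1 + b * x ^ 2) / (1 + a * x ^ 2)) x
        = (b / a) * (1 / x) + (1 - b / a) * (1 / Real.sqrt a) *
            (ci (x / Real.sqrt a) * Real.sin (x / Real.sqrt a)
              - si (x / Real.sqrt a) * Real.cos (x / Real.sqrt a)) := by
  refine ⟨isGenStieltjes_laplaceTransform_rationalWeight hb hba ha,
    logCompletelyMonotonic_laplaceTransform_rationalWeight hb hba ha, fun x hx => ?_⟩
  have hy : 0 < x / Real.sqrt a := by positivity
  refine (laplaceTransform_rationalWeight_eq hb hba ha hx).trans ?_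
  rw [integral_Ioi_inv_add_sq_mul_one_sub_cos hy (hsi _ hy) (hci _ hy)]
  ring
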